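/- Let p be a prime, d ≥ 2 an integer divisible by p, and m a positive integer not divisible by p. Set r = m/d ∈ ℚ. Then for every integer E ≥ 2, the p-adic valuation of V_{r,E}(−1) = Σ_{k=0}^{E−1} (−1)^k·C(r,k) is strictly negative; in particular V_{r,E}(−1) is not a p-adic integer. -/

import Mathlib

/-!
By Pascal's rule the alternating sum telescopes: `∑_{k ≤ n} (-1)^k C(r, k) = (-1)^n C(r - 1, n)`.
If `v_p(r) < 0`, then subtracting a natural number from `r` does not change its valuation, so each
of the `n` factors in the numerator of `C(r - 1, n)` has valuation `v_p(r)`, and the sum has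
valuation exactly `n v_p(r) - v_p(n!)`.
-/

open Polynomial Finset

/-- The generalized binomial coefficient `C(r, k) = r (r-1) ⋯ (r-k+1) / k!` for `r : ℚ`. -/
def genBinom (r : ℚ) (k : ℕ) : ℚ :=
  (∏ i ∈ Finset.range k, (r - i)) / (Nat.factorial k)

/-- The truncated binomial polynomial `V_{r,E}(x) = Σ_{k=0}^{E-1} C(r,k) x^k ∈ ℚ[x]`. -/
noncomputable def truncBinom (r : ℚ) (E : ℕ) : Polynomial ℚ :=
  ∑ k ∈ Finset.range E, Polynomial.C (genBinom r k) * Polynomial.X ^ k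

theorem genBinom_eq_choose (r : ℚ) (k : ℕ) : genBinom r k = Ring.choose r k := by
  rw [genBinom, Ring.choose_eq_smul, ← aeval_eq_smeval, aeval_def, ← eval_map,
    descPochhammer_map, descPochhammer_eval_eq_prod_range, smul_eq_mul, div_eq_inv_mul]

theorem sum_range_succ_neg_one_pow_mul_choose {R : Type*} [Ring R] [BinomialRing R]
    (r : R) (n : ℕ) :
    ∑ k ∈ range (n + 1), (-1) ^ k * Ring.choose r k = (-1) ^ n * Ring.choose (r - 1) n := by
  induction n with
  | zero => simp only [zero_add, sum_range_one, pow_zero, Ring.choose_zero_right]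
  | succ n ih =>
    have pascal : Ring.choose r (n + 1) = Ring.choose (r - 1) n + Ring.choose (r - 1) (n + 1) := by
      simpa only [sub_add_cancel] using Ring.choose_succ_succ (r - 1) n
    rw [sum_range_succ, ih, pascal, pow_succ]
    noncomm_ring

theorem eval_neg_one_truncBinom_succ (r : ℚ) (n : ℕ) :
    (truncBinom r (n + 1)).eval (-1) = (-1) ^ n * genBinom (r - 1) n := by
  rw [genBinom_eq_choose, ← sum_range_succ_neg_one_pow_mul_choose]
  simp only [truncBinom, eval_finsetSum, eval_mul, eval_C, eval_pow, eval_X, genBinom_eq_choose,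
    mul_comm]

theorem ne_zero_of_padicValRat_neg {p : ℕ} {q : ℚ} (hq : padicValRat p q < 0) : q ≠ 0 := by
  rintro rfl
  exact hq.ne padicValRat.zero

theorem padicValRat_neg_one_pow_mul (p n : ℕ) (q : ℚ) :
    padicValRat p ((-1) ^ n * q) = padicValRat p q := by
  obtain h | h := neg_one_pow_eq_or ℚ n <;> simp only [h, one_mul, neg_mul, padicValRat.neg]

section Valuation

variable {p : ℕ} [Fact p.Prime]

theorem padicValRat_prod {ι : Type*} {s : Finset ι} {f : ι → ℚ} (hf : ∀ i ∈ s, f i ≠ 0) :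
    padicValRat p (∏ i ∈ s, f i) = ∑ i ∈ s, padicValRat p (f i) := by
  induction s using Finset.cons_induction with
  | empty => simp only [prod_empty, sum_empty, padicValRat.one]
  | cons a s ha ih =>
    rw [forall_mem_cons] at hf
    rw [prod_cons, sum_cons, padicValRat.mul hf.1 (prod_ne_zero_iff.2 hf.2), ih hf.2]

theorem padicValRat_sub_of_neg_of_nonneg {r q : ℚ} (hr : padicValRat p r < 0)
    (hq : 0 ≤ padicValRat p q) : padicValRat p (r - q) = padicValRat p r := by
  obtain rfl | hq0 := eq_or_ne q 0
  · rw [sub_zero]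
  have hlt : padicValRat p r < padicValRat p (-q) := by
    rw [padicValRat.neg]
    exact hr.trans_le hq
  have hrq : r + -q ≠ 0 := fun h => hr.not_ge (add_neg_eq_zero.1 h ▸ hq)
  rw [sub_eq_add_neg]
  exact padicValRat.add_eq_of_lt hrq (ne_zero_of_padicValRat_neg hr) (neg_ne_zero.2 hq0) hlt

theorem padicValRat_genBinom {r : ℚ} (hr : padicValRat p r < 0) (n : ℕ) :
    padicValRat p (genBinom r n) = n * padicValRat p r - padicValNat p n.factorial := by
  have hfactor (i : ℕ) : padicValRat p (r - i) = padicValRat p r :=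
    padicValRat_sub_of_neg_of_nonneg hr (zero_le_padicValRat_of_nat i)
  have hne (i : ℕ) : r - i ≠ 0 := ne_zero_of_padicValRat_neg ((hfactor i).trans_lt hr)
  rw [genBinom, padicValRat.div (prod_ne_zero_iff.2 fun i _ => hne i)
      (Nat.cast_ne_zero.2 n.factorial_ne_zero), padicValRat_prod fun i _ => hne i,
    padicValRat.of_nat]
  simp only [hfactor, sum_const, card_range, nsmul_eq_mul]

theorem padicValRat_eval_neg_one_truncBinom_succ {r : ℚ} (hr : padicValRat p r < 0) (n : ℕ) :
    padicValRat p ((truncBinom r (n + 1)).eval (-1)) =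
      n * padicValRat p r - padicValNat p n.factorial := by
  have hr_sub_one : padicValRat p (r - 1) = padicValRat p r :=
    padicValRat_sub_of_neg_of_nonneg hr padicValRat.one.ge
  rw [eval_neg_one_truncBinom_succ, padicValRat_neg_one_pow_mul,
    padicValRat_genBinom (hr_sub_one.trans_lt hr), hr_sub_one]

theorem padicValRat_natCast_div_natCast_neg {a b : ℕ} (hb : b ≠ 0) (hpb : p ∣ b)
    (hpa : ¬ p ∣ a) : padicValRat p ((a : ℚ) / b) < 0 := by
  have ha : a ≠ 0 := fun h => hpa (h ▸ dvd_zero p)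
  have hvb : 1 ≤ padicValNat p b := one_le_padicValNat_of_dvd hb hpb
  rw [padicValRat.div (Nat.cast_ne_zero.2 ha) (Nat.cast_ne_zero.2 hb), padicValRat.of_nat,
    padicValRat.of_nat, padicValNat.eq_zero_of_not_dvd hpa]
  omega

theorem stmt11_general {r : ℚ} (hr : padicValRat p r < 0) {E : ℕ} (hE : 2 ≤ E) :
    padicValRat p ((truncBinom r E).eval (-1)) < 0 := by
  obtain ⟨n, rfl⟩ := Nat.exists_eq_add_of_le' hE
  rw [padicValRat_eval_neg_one_truncBinom_succ hr]
  have hmul : ((n + 1 : ℕ) : ℤ) * padicValRat p r < 0 := mul_neg_of_pos_of_neg (by positivity) hr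
  omega

end Valuation

/-- Let `p` be prime, `d ≥ 2` divisible by `p`, `m > 0` not divisible by
`p`, and `r = m/d`. Then for every integer `E ≥ 2`, the `p`-adic valuation of
`V_{r,E}(-1) = Σ_{k=0}^{E-1} (-1)^k C(r,k)` is strictly negative; in particular `V_{r,E}(-1)`
is not a `p`-adic integer. -/
theorem stmt11 (p d m : ℕ) (hp : p.Prime) (hd : 2 ≤ d) (hpd : p ∣ d)
    (hm : 0 < m) (hpm : ¬ p ∣ m) :
    ∀ E : ℕ, 2 ≤ E →
      padicValRat p ((truncBinom ((m : ℚ) / d) E).eval (-1)) < 0 := by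
  have : Fact p.Prime := ⟨hp⟩
  exact fun _ => stmt11_general (padicValRat_natCast_div_natCast_neg (by omega) hpd hpm)
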